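/- arXiv:1901.09254 — 2 statements merged into one kernel-verified Lean document; each statement's English description precedes it below -/
import Mathlib

section
/- Let V, W, Z be Banach spaces with Z finite dimensional. If Z × V is isomorphic (as topological vector spaces, via a continuous linear equivalence) to Z × W, then V is isomorphic to W. -/
theorem cancel_aux {V W : Type*}
    [NormedAddCommGroup V] [NormedSpace ℂ V] [NormedAddCommGroup W] [NormedSpace ℂ W]
    (e : (ℂ × V) ≃L[ℂ] (ℂ × W)) (ha : (e (1, 0)).1 ≠ 0) : Nonempty (V ≃L[ℂ] W) := by
  have key : ∀ (s : ℂ) (v : V), (e (s, v)).1 = s * (e (1, 0)).1 + (e (0, v)).1 := by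
    intro s v
    have h1 : ((s, v) : ℂ × V) = s • ((1, 0) : ℂ × V) + (0, v) := by simp
    rw [h1, map_add, map_smul]; simp
  let p : V →L[ℂ] ℂ := -((e (1, 0)).1⁻¹ •
    ((ContinuousLinearMap.fst ℂ ℂ W).comp
      ((e : (ℂ × V) →L[ℂ] (ℂ × W)).comp (ContinuousLinearMap.inr ℂ ℂ V))))
  have hp : ∀ v, p v = -((e (1, 0)).1⁻¹ * (e (0, v)).1) := fun v => by simp [p]
  let S : V →L[ℂ] W := (ContinuousLinearMap.snd ℂ ℂ W).comp
    ((e : (ℂ × V) →L[ℂ] (ℂ × W)).comp (p.prod (ContinuousLinearMap.id ℂ V)))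
  let T : W →L[ℂ] V := (ContinuousLinearMap.snd ℂ ℂ V).comp
    ((e.symm : (ℂ × W) →L[ℂ] (ℂ × V)).comp (ContinuousLinearMap.inr ℂ ℂ W))
  have hS : ∀ v, S v = (e (p v, v)).2 := fun v => rfl
  have hT : ∀ w, T w = (e.symm (0, w)).2 := fun w => rfl
  refine ⟨ContinuousLinearEquiv.equivOfInverse S T ?_ ?_⟩
  · intro v
    have h0 : (e (p v, v)).1 = 0 := by
      rw [key, hp]; field_simp; ring
    have h1 : ((0, S v) : ℂ × W) = e (p v, v) := Prod.ext h0.symm (hS v)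
    rw [hT, h1, e.symm_apply_apply]
  · intro w
    have h1 : e ((e.symm (0, w)).1, T w) = (0, w) := by
      rw [hT, Prod.mk.eta, e.apply_symm_apply]
    have h2 : (e ((e.symm (0, w)).1, T w)).1 = 0 := by rw [h1]
    rw [key] at h2
    have h3 : p (T w) = (e.symm (0, w)).1 := by
      rw [hp]; field_simp; linear_combination -h2
    rw [hS, h3, h1]

theorem cancel_one {V W : Type*}
    [NormedAddCommGroup V] [NormedSpace ℂ V] [NormedAddCommGroup W] [NormedSpace ℂ W]
    (e : (ℂ × V) ≃L[ℂ] (ℂ × W)) : Nonempty (V ≃L[ℂ] W) := by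
  by_cases ha : (e (1, 0)).1 = 0
  · obtain ⟨⟨s, v⟩, hx⟩ := e.surjective (1, 0)
    have hv : (e (0, v)).1 = 1 := by
      have h1 : ((s, v) : ℂ × V) = s • ((1, 0) : ℂ × V) + (0, v) := by simp
      rw [h1, map_add, map_smul] at hx
      have := congrArg Prod.fst hx
      simpa [ha] using this
    let F : ℂ → ((ℂ × V) →L[ℂ] (ℂ × V)) := fun c =>
      (ContinuousLinearMap.fst ℂ ℂ V).prod (ContinuousLinearMap.snd ℂ ℂ V +
        c • (ContinuousLinearMap.fst ℂ ℂ V).smulRight v)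
    let sh : (ℂ × V) ≃L[ℂ] (ℂ × V) := ContinuousLinearEquiv.equivOfInverse (F 1) (F (-1))
      (fun x => by simp [F]) (fun x => by simp [F])
    refine cancel_aux (sh.trans e) ?_
    have h2 : sh (1, 0) = (1, 0) + (0, v) := by
      change F 1 (1, 0) = _
      simp [F]
    rw [ContinuousLinearEquiv.trans_apply, h2, map_add, Prod.fst_add, ha, hv]
    simp
  · exact cancel_aux e ha

theorem cancel_fin {V W : Type*}
    [NormedAddCommGroup V] [NormedSpace ℂ V] [NormedAddCommGroup W] [NormedSpace ℂ W] (n : ℕ)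
    (e : ((Fin n → ℂ) × V) ≃L[ℂ] ((Fin n → ℂ) × W)) : Nonempty (V ≃L[ℂ] W) := by
  induction n with
  | zero =>
    exact ⟨((ContinuousLinearEquiv.uniqueProd ℂ V (Fin 0 → ℂ)).symm.trans e).trans
      (ContinuousLinearEquiv.uniqueProd ℂ W (Fin 0 → ℂ))⟩
  | succ n ih =>
    let c := Fin.consEquivL ℂ (fun _ : Fin (n + 1) => ℂ)
    let a := (ContinuousLinearEquiv.prodAssoc ℂ ℂ (Fin n → ℂ) V).symm.trans
      (c.prodCongr (ContinuousLinearEquiv.refl ℂ V))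
    let b := (ContinuousLinearEquiv.prodAssoc ℂ ℂ (Fin n → ℂ) W).symm.trans
      (c.prodCongr (ContinuousLinearEquiv.refl ℂ W))
    obtain ⟨f⟩ := cancel_one ((a.trans e).trans b.symm)
    exact ih f

theorem finite_dim_cancellation
    (V W Z : Type*)
    [NormedAddCommGroup V] [NormedSpace ℂ V] [CompleteSpace V]
    [NormedAddCommGroup W] [NormedSpace ℂ W] [CompleteSpace W]
    [NormedAddCommGroup Z] [NormedSpace ℂ Z] [CompleteSpace Z]
    [FiniteDimensional ℂ Z]
    (h : Nonempty ((Z × V) ≃L[ℂ] (Z × W))) :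
    Nonempty (V ≃L[ℂ] W) := by
  obtain ⟨e⟩ := h
  let z : Z ≃L[ℂ] (Fin (Module.finrank ℂ Z) → ℂ) :=
    ContinuousLinearEquiv.ofFinrankEq (by simp)
  exact cancel_fin _ (((z.prodCongr (ContinuousLinearEquiv.refl ℂ V)).symm.trans e).trans
    (z.prodCongr (ContinuousLinearEquiv.refl ℂ W)))
end

section
/- If Banach spaces Z₁ and Z₂ are each stable under finite dimensional quotients, then their direct sum Z₁ × Z₂ is stable under finite dimensional quotients. -/
/-- A Banach space `Z` is *stable under finite dimensional quotients* if `Z` is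
isomorphic (via a continuous linear equivalence) to every closed subspace of `Z`
that admits a finite dimensional complement. -/
def StableUnderFinDimQuotients (Z : Type*) [NormedAddCommGroup Z] [NormedSpace ℂ Z] : Prop :=
  ∀ V F : Submodule ℂ Z, IsClosed (V : Set Z) → IsCompl V F → FiniteDimensional ℂ F →
    Nonempty (Z ≃L[ℂ] V)

open Module in
lemma split_aux {E : Type*} [NormedAddCommGroup E] [NormedSpace ℂ E]
    (U V : Submodule ℂ E) (hU : IsClosed (U : Set E)) (hUV : U ≤ V)
    [FiniteDimensional ℂ (E ⧸ U)] (k : ℕ)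
    (hk : k + finrank ℂ (E ⧸ V) = finrank ℂ (E ⧸ U)) :
    Nonempty (V ≃L[ℂ] (U × (Fin k → ℂ))) := by
  let P : Submodule ℂ V := U.comap V.subtype
  have hP : IsClosed (P : Set V) := hU.preimage continuous_subtype_val
  let T : V →ₗ[ℂ] (E ⧸ U) := U.mkQ.comp V.subtype
  have hker : LinearMap.ker T = P := by
    simp [T, P, LinearMap.ker_comp]
  have hrange : LinearMap.range T = V.map U.mkQ := by
    simp [T, LinearMap.range_comp]
  let e0 : (V ⧸ P) ≃ₗ[ℂ] (V.map U.mkQ) :=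
    (Submodule.quotEquivOfEq _ _ hker.symm).trans
      (T.quotKerEquivRange.trans (LinearEquiv.ofEq _ _ hrange))
  have hfd : FiniteDimensional ℂ (V ⧸ P) := e0.symm.finiteDimensional
  have h1 := (V.map U.mkQ).finrank_quotient_add_finrank
  rw [(Submodule.quotientQuotientEquivQuotient U V hUV).finrank_eq, ← e0.finrank_eq] at h1
  obtain ⟨Q, hQ⟩ := (Submodule.ClosedComplemented.of_finiteDimensional_quotient hP).exists_isTopCompl
  have eQ : (V ⧸ P) ≃ₗ[ℂ] Q := Submodule.quotientEquivOfIsCompl P Q hQ.isCompl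
  have : FiniteDimensional ℂ Q := eQ.finiteDimensional
  have hfr : finrank ℂ Q = finrank ℂ (Fin k → ℂ) := by
    rw [← eQ.finrank_eq, finrank_fin_fun]; omega
  let ePU : P ≃L[ℂ] U :=
    { Submodule.comapSubtypeEquivOfLe hUV with
      continuous_toFun := by
        refine Continuous.subtype_mk (continuous_subtype_val.comp continuous_subtype_val) _
      continuous_invFun := by
        refine Continuous.subtype_mk (Continuous.subtype_mk continuous_subtype_val _) _ }
  exact ⟨(Submodule.prodEquivOfIsTopCompl P Q hQ).symm.trans
    (ePU.prodCongr (ContinuousLinearEquiv.ofFinrankEq hfr))⟩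

open Module in
lemma iso_aux {E : Type*} [NormedAddCommGroup E] [NormedSpace ℂ E]
    (W V : Submodule ℂ E) (hW : IsClosed (W : Set E)) (hV : IsClosed (V : Set E))
    [FiniteDimensional ℂ (E ⧸ W)] [FiniteDimensional ℂ (E ⧸ V)]
    (h : finrank ℂ (E ⧸ W) = finrank ℂ (E ⧸ V)) :
    Nonempty (W ≃L[ℂ] V) := by
  have : FiniteDimensional ℂ (E ⧸ (W ⊓ V)) := by
    let T : E →ₗ[ℂ] (E ⧸ W) × (E ⧸ V) := W.mkQ.prod V.mkQ
    have hT : LinearMap.ker T = W ⊓ V := by simp [T, LinearMap.ker_prod]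
    rw [← hT]
    exact T.quotKerEquivRange.symm.finiteDimensional
  have hle : finrank ℂ (E ⧸ V) ≤ finrank ℂ (E ⧸ (W ⊓ V)) :=
    LinearMap.finrank_le_finrank_of_surjective
      (f := Submodule.factor (inf_le_right : W ⊓ V ≤ V)) (Submodule.factor_surjective _)
  obtain ⟨k, hk⟩ := Nat.exists_eq_add_of_le' hle
  obtain ⟨a⟩ := split_aux (W ⊓ V) W (hW.inter hV) inf_le_left k (by omega)
  obtain ⟨b⟩ := split_aux (W ⊓ V) V (hW.inter hV) inf_le_right k (by omega)
  exact ⟨a.trans b.symm⟩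

open Module in
lemma exists_closed_codim {Z : Type*} [NormedAddCommGroup Z] [NormedSpace ℂ Z]
    (hZ : StableUnderFinDimQuotients Z) (hinf : ¬ FiniteDimensional ℂ Z) (n : ℕ) :
    ∃ W : Submodule ℂ Z, IsClosed (W : Set Z) ∧ FiniteDimensional ℂ (Z ⧸ W) ∧
      finrank ℂ (Z ⧸ W) = n ∧ Nonempty (Z ≃L[ℂ] W) := by
  have hr : (n : Cardinal) ≤ Module.rank ℂ Z := by
    have : Cardinal.aleph0 ≤ Module.rank ℂ Z := by
      rw [← not_lt]; exact fun h => hinf (Module.rank_lt_aleph0_iff.1 h)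
    exact (Cardinal.natCast_lt_aleph0).le.trans this
  obtain ⟨v, hv⟩ := exists_linearIndependent_of_le_rank hr
  let F := Submodule.span ℂ (Set.range v)
  have hF : FiniteDimensional ℂ F := FiniteDimensional.span_of_finite ℂ (Set.finite_range v)
  have hFn : finrank ℂ F = n := by
    simpa using finrank_span_eq_card hv
  obtain ⟨W, hW, hc⟩ := (Submodule.ClosedComplemented.of_finiteDimensional F).exists_isClosed_isCompl
  let e := Submodule.quotientEquivOfIsCompl W F hc.symm
  exact ⟨W, hW, e.symm.finiteDimensional, e.finrank_eq.trans hFn, hZ W F hW hc.symm hF⟩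

open Module in
lemma trivial_of_finite {Z : Type*} [NormedAddCommGroup Z] [NormedSpace ℂ Z]
    (hZ : StableUnderFinDimQuotients Z) (hfin : FiniteDimensional ℂ Z) : Subsingleton Z := by
  obtain ⟨e⟩ := hZ ⊥ ⊤ (Submodule.closed_of_finiteDimensional _) isCompl_bot_top inferInstance
  exact e.toEquiv.subsingleton

theorem stable_prod
    (Z₁ Z₂ : Type*)
    [NormedAddCommGroup Z₁] [NormedSpace ℂ Z₁] [CompleteSpace Z₁]
    [NormedAddCommGroup Z₂] [NormedSpace ℂ Z₂] [CompleteSpace Z₂]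
    (h₁ : StableUnderFinDimQuotients Z₁) (h₂ : StableUnderFinDimQuotients Z₂) :
    StableUnderFinDimQuotients (Z₁ × Z₂) := by
  intro V F hV hc hF
  let eF := Submodule.quotientEquivOfIsCompl V F hc
  have hVfd : FiniteDimensional ℂ ((Z₁ × Z₂) ⧸ V) := eF.symm.finiteDimensional
  by_cases hf₁ : FiniteDimensional ℂ Z₁
  · by_cases hf₂ : FiniteDimensional ℂ Z₂
    · have := trivial_of_finite h₁ hf₁
      have := trivial_of_finite h₂ hf₂
      exact ⟨(0 : (Z₁ × Z₂) ≃ₗ[ℂ] V).toContinuousLinearEquiv⟩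
    · obtain ⟨W, hW, hWfd, hWn, ⟨e⟩⟩ :=
        exists_closed_codim h₂ hf₂ (Module.finrank ℂ ((Z₁ × Z₂) ⧸ V))
      let T : (Z₁ × Z₂) →ₗ[ℂ] (Z₂ ⧸ W) := W.mkQ.comp (LinearMap.snd ℂ Z₁ Z₂)
      let W' : Submodule ℂ (Z₁ × Z₂) := W.comap (LinearMap.snd ℂ Z₁ Z₂)
      have hT : LinearMap.ker T = W' := by simp [T, W', LinearMap.ker_comp]
      have hTs : Function.Surjective T := W.mkQ_surjective.comp Prod.snd_surjective
      let q := (Submodule.quotEquivOfEq _ _ hT.symm).trans (T.quotKerEquivOfSurjective hTs)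
      have : FiniteDimensional ℂ ((Z₁ × Z₂) ⧸ W') := q.symm.finiteDimensional
      have hW' : IsClosed (W' : Set (Z₁ × Z₂)) := hW.preimage continuous_snd
      obtain ⟨i⟩ := iso_aux W' V hW' hV (q.finrank_eq.trans hWn)
      let j : (Z₁ × W) ≃L[ℂ] W' :=
        { toFun := fun x => ⟨(x.1, x.2), x.2.2⟩
          invFun := fun x => (x.1.1, ⟨x.1.2, x.2⟩)
          map_add' := fun _ _ => rfl
          map_smul' := fun _ _ => rfl
          left_inv := fun _ => rfl
          right_inv := fun _ => rfl
          continuous_toFun := by fun_prop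
          continuous_invFun := by fun_prop }
      exact ⟨((ContinuousLinearEquiv.refl ℂ Z₁).prodCongr e).trans (j.trans i)⟩
  · obtain ⟨W, hW, hWfd, hWn, ⟨e⟩⟩ :=
      exists_closed_codim h₁ hf₁ (Module.finrank ℂ ((Z₁ × Z₂) ⧸ V))
    let T : (Z₁ × Z₂) →ₗ[ℂ] (Z₁ ⧸ W) := W.mkQ.comp (LinearMap.fst ℂ Z₁ Z₂)
    let W' : Submodule ℂ (Z₁ × Z₂) := W.comap (LinearMap.fst ℂ Z₁ Z₂)
    have hT : LinearMap.ker T = W' := by simp [T, W', LinearMap.ker_comp]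
    have hTs : Function.Surjective T := W.mkQ_surjective.comp Prod.fst_surjective
    let q := (Submodule.quotEquivOfEq _ _ hT.symm).trans (T.quotKerEquivOfSurjective hTs)
    have : FiniteDimensional ℂ ((Z₁ × Z₂) ⧸ W') := q.symm.finiteDimensional
    have hW' : IsClosed (W' : Set (Z₁ × Z₂)) := hW.preimage continuous_fst
    obtain ⟨i⟩ := iso_aux W' V hW' hV (q.finrank_eq.trans hWn)
    let j : (W × Z₂) ≃L[ℂ] W' :=
      { toFun := fun x => ⟨(x.1, x.2), x.1.2⟩
        invFun := fun x => (⟨x.1.1, x.2⟩, x.1.2)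
        map_add' := fun _ _ => rfl
        map_smul' := fun _ _ => rfl
        left_inv := fun _ => rfl
        right_inv := fun _ => rfl
        continuous_toFun := by fun_prop
        continuous_invFun := by fun_prop }
    exact ⟨(e.prodCongr (ContinuousLinearEquiv.refl ℂ Z₂)).trans (j.trans i)⟩
end
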